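/- There exist constants 0 < c ≤ C, depending only on d and Γ, and ρ₀, depending only on d, Γ, κ and the exponents α_j, such that for all ρ ≥ ρ₀, every ξ ∈ ℝ^d with |ξ| ≥ ρ/2, and every η ∈ Υ(ξ), one has c|ξ| ≤ |η| ≤ C|ξ|. -/

import Mathlib

noncomputable section

open Set Submodule Module MeasureTheory Relation
open scoped RealInnerProductSpace

variable {d : ℕ}

/-- The lattice Γ generated over ℤ by the basis `B` of ℝ^d. -/
def latticeOf (B : Basis (Fin d) ℝ (EuclideanSpace ℝ (Fin d))) :
    Submodule ℤ (EuclideanSpace ℝ (Fin d)) :=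
  Submodule.span ℤ (Set.range B)

/-- The determinant d(Γ) of the lattice generated by `B`. -/
def latDet (B : Basis (Fin d) ℝ (EuclideanSpace ℝ (Fin d))) : ℝ :=
  |(EuclideanSpace.basisFun (Fin d) ℝ).toBasis.det (fun i => B i)|

/-- The dual lattice Γ† = {θ : θ·g ∈ 2πℤ for all g ∈ Γ}. -/
def dualLattice (B : Basis (Fin d) ℝ (EuclideanSpace ℝ (Fin d))) :
    Set (EuclideanSpace ℝ (Fin d)) :=
  {θ | ∀ g ∈ latticeOf B, ∃ k : ℤ, ⟪θ, g⟫ = 2 * Real.pi * k}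

/-- Θ_r : nonzero dual lattice vectors of norm at most r. -/
def Theta (B : Basis (Fin d) ℝ (EuclideanSpace ℝ (Fin d))) (r : ℝ) :
    Set (EuclideanSpace ℝ (Fin d)) :=
  {θ | θ ∈ dualLattice B ∧ θ ≠ 0 ∧ ‖θ‖ ≤ r}

/-- Θ_r⁰ : dual lattice vectors of norm at most r (including 0). -/
def Theta0 (B : Basis (Fin d) ℝ (EuclideanSpace ℝ (Fin d))) (r : ℝ) :
    Set (EuclideanSpace ℝ (Fin d)) :=
  {θ | θ ∈ dualLattice B ∧ ‖θ‖ ≤ r}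

/-- A lattice r-subspace: a subspace spanned by dual lattice vectors from Θ_r⁰. -/
def IsLatticeSubspace (B : Basis (Fin d) ℝ (EuclideanSpace ℝ (Fin d))) (r : ℝ)
    (V : Submodule ℝ (EuclideanSpace ℝ (Fin d))) : Prop :=
  ∃ S : Set (EuclideanSpace ℝ (Fin d)), S ⊆ Theta0 B r ∧ V = Submodule.span ℝ S

/-- Orthogonal projection ξ_V onto a subspace, viewed in the ambient space. -/
def projV (V : Submodule ℝ (EuclideanSpace ℝ (Fin d))) (ξ : EuclideanSpace ℝ (Fin d)) :
    EuclideanSpace ℝ (Fin d) :=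
  (orthogonalProjection V ξ : EuclideanSpace ℝ (Fin d))

/-- ω_n: the volume of the unit ball in ℝ^n. -/
def unitBallVol (n : ℕ) : ℝ :=
  (MeasureTheory.volume (Metric.ball (0 : EuclideanSpace ℝ (Fin n)) 1)).toReal

/-- The resonant layer Λ(θ) (= ℝ^d when θ = 0). -/
def layer (ρ a : ℝ) (θ : EuclideanSpace ℝ (Fin d)) : Set (EuclideanSpace ℝ (Fin d)) :=
  {ξ | θ = 0 ∨ |⟪ξ, θ⟫| < ρ ^ a * ‖θ‖}

/-- Υ_θ(ξ): the points θ-resonant congruent to ξ. -/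
def upsTheta (ρ a : ℝ) (θ ξ : EuclideanSpace ℝ (Fin d)) : Set (EuclideanSpace ℝ (Fin d)) :=
  {η | ξ ∈ layer ρ a θ ∧ η ∈ layer ρ a θ ∧ ∃ l : ℤ, ξ - η = (l : ℝ) • θ}

/-- One step of resonant congruence (with some θ ∈ Θ_r⁰). -/
def resStep (B : Basis (Fin d) ℝ (EuclideanSpace ℝ (Fin d))) (ρ a r : ℝ)
    (ξ η : EuclideanSpace ℝ (Fin d)) : Prop :=
  ∃ θ ∈ Theta0 B r, η ∈ upsTheta ρ a θ ξ

/-- Υ(ξ): all points resonant congruent to ξ. -/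
def Ups (B : Basis (Fin d) ℝ (EuclideanSpace ℝ (Fin d))) (ρ a r : ℝ)
    (ξ : EuclideanSpace ℝ (Fin d)) : Set (EuclideanSpace ℝ (Fin d)) :=
  {η | Relation.ReflTransGen (resStep B ρ a r) ξ η}

/-- N(ξ) = Υ(ξ) − ξ. -/
def resN (B : Basis (Fin d) ℝ (EuclideanSpace ℝ (Fin d))) (ρ a r : ℝ)
    (ξ : EuclideanSpace ℝ (Fin d)) : Set (EuclideanSpace ℝ (Fin d)) :=
  {m | ξ + m ∈ Ups B ρ a r ξ}

/-- Ξ₁(V) = {ξ : |ξ_V| < ρ^{α_n}}, n = dim V. -/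
def Xi1 (ρ : ℝ) (α : ℕ → ℝ) (V : Submodule ℝ (EuclideanSpace ℝ (Fin d))) :
    Set (EuclideanSpace ℝ (Fin d)) :=
  {ξ | ‖projV V ξ‖ < ρ ^ α (Module.finrank ℝ V)}

/-- Ξ₂(V) = ∪_{ξ ∈ Ξ₁(V)} Υ(ξ). -/
def Xi2 (B : Basis (Fin d) ℝ (EuclideanSpace ℝ (Fin d))) (ρ r : ℝ) (α : ℕ → ℝ)
    (V : Submodule ℝ (EuclideanSpace ℝ (Fin d))) : Set (EuclideanSpace ℝ (Fin d)) :=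
  {η | ∃ ξ ∈ Xi1 ρ α V, η ∈ Ups B ρ (α 1) r ξ}

/-- Ξ(V): Ξ₂(V) minus the Ξ₂(W) for all lattice r-subspaces W of larger dimension. -/
def Xi (B : Basis (Fin d) ℝ (EuclideanSpace ℝ (Fin d))) (ρ r : ℝ) (α : ℕ → ℝ)
    (V : Submodule ℝ (EuclideanSpace ℝ (Fin d))) : Set (EuclideanSpace ℝ (Fin d)) :=
  Xi2 B ρ r α V \
    ⋃ W ∈ {W : Submodule ℝ (EuclideanSpace ℝ (Fin d)) |
        IsLatticeSubspace B r W ∧ Module.finrank ℝ V < Module.finrank ℝ W},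
      Xi2 B ρ r α W

/-- The standing conditions on the parameters ρ ≥ 1, r, κ > 0 and the exponents α_j:
0 = α₀, α_{n+1} > α_n + 2κd², α_d < 1, r ≤ ρ^κ, and r ≥ r₀ (i.e. Θ_r⁰ spans ℝ^d). -/
def GoodParams (B : Basis (Fin d) ℝ (EuclideanSpace ℝ (Fin d))) (ρ r κ : ℝ)
    (α : ℕ → ℝ) : Prop :=
  1 ≤ ρ ∧ 0 < κ ∧ α 0 = 0 ∧ (∀ n < d, α n + 2 * κ * (d : ℝ) ^ 2 < α (n + 1)) ∧
    α d < 1 ∧ r ≤ ρ ^ κ ∧ Submodule.span ℝ (Theta0 B r) = ⊤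

/-!
A resonant congruence class is a chain of steps along dual lattice vectors `θ`, `‖θ‖ ≤ r`, each
nearly orthogonal to both endpoints of its step. It suffices to bound the displacement of such a
chain by a power of `ρ` with exponent below one. This goes by induction on the dimension of the span
of the admissible directions. If the directions nearly orthogonal to one end of the chain span a
smaller space, then by induction the chain cannot travel far enough to use any other direction.
Otherwise both ends `x` and `y` are nearly orthogonal to the whole span, which contains `x - y`, so
that `‖x - y‖² = ⟪x, x - y⟫ - ⟪y, x - y⟫` is small. Near-orthogonality to lattice vectors of length
at most `s` passes to their span at the cost of a factor `C * s ^ d`: by Cramer's rule, since the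
determinant of independent lattice vectors is a nonzero integer in lattice coordinates.
-/

section Lattice

variable {ι E : Type*}

theorem exists_basis_subset_of_span_eq_top {K V : Type*} [DivisionRing K] [AddCommGroup V]
    [Module K V] (e : Basis ι K V) {S T : Set V} (hST : S ⊆ T) (hT : span K T = ⊤) :
    ∃ β : Basis ι K V, range β ⊆ T ∧ S ⊆ span K (S ∩ range β) := by
  obtain ⟨b, hbS, hspan, hb⟩ := exists_linearIndependent K S
  let β := Basis.extendLe hb (hbS.trans hST) hT.ge
  refine ⟨β.reindex (β.indexEquiv e), ?_, ?_⟩ <;> rw [Basis.range_reindex]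
  · exact Basis.extendLe_subset ..
  · exact (subset_span.trans hspan.ge).trans
      (span_mono (subset_inter hbS (Basis.subset_extendLe ..)))

variable [Fintype ι]

theorem det_mul_repr_eq_det_update {R M : Type*} [CommRing R] [AddCommGroup M] [Module R M]
    [DecidableEq ι] (e β : Basis ι R M) (v : M) (i : ι) :
    e.det β * β.repr v i = e.det (Function.update β i v) := by
  have hmk : Basis.mk β.linearIndependent β.span_eq.ge = β :=
    Basis.eq_of_apply_eq fun j => Basis.mk_apply _ _ j
  simpa [hmk] using
    congr($(e.det_smul_mk_coord_eq_det_update β.linearIndependent β.span_eq.ge i) v)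

theorem one_le_abs_det_of_mem_span_int {K V : Type*} [Field K] [LinearOrder K]
    [IsStrictOrderedRing K] [AddCommGroup V] [Module K V] [DecidableEq ι] (e β : Basis ι K V)
    (hβ : ∀ i, β i ∈ span ℤ (range e)) : 1 ≤ |e.det β| := by
  choose k hk using fun i j => (e.mem_span_iff_repr_mem ℤ (β i)).1 (hβ i) j
  have hdet : e.det β = ((Matrix.of fun j i => k i j).det : K) := by
    rw [e.det_apply, ← eq_intCast (algebraMap ℤ K), RingHom.map_det]
    congr 1
    ext j i
    exact (hk i j).symm
  have hne : e.det β ≠ 0 := (e.isUnit_det β).ne_zero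
  rw [hdet, Int.cast_ne_zero] at hne
  rw [hdet]
  exact_mod_cast Int.one_le_abs hne

variable [NormedAddCommGroup E] [NormedSpace ℝ E]

theorem exists_abs_det_le_prod_norm [DecidableEq ι] (e : Basis ι ℝ E) :
    ∃ D > 0, ∀ v : ι → E, |e.det v| ≤ D * ∏ i, ‖v i‖ := by
  have := e.finiteDimensional_of_finite
  refine e.det.toMultilinearMap.exists_bound_of_continuous ?_
  exact (LinearMap.continuous_of_finiteDimensional e.toMatrixEquiv.toLinearMap).matrix_det

theorem abs_repr_mul_norm_le [DecidableEq ι] {e β : Basis ι ℝ E} {D : ℝ}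
    (hD : ∀ v : ι → E, |e.det v| ≤ D * ∏ i, ‖v i‖) (hβ : ∀ i, β i ∈ span ℤ (range e))
    (v : E) (i : ι) : |β.repr v i| * ‖β i‖ ≤ D * (∏ j, ‖β j‖) * ‖v‖ :=
  calc |β.repr v i| * ‖β i‖
      ≤ |e.det β| * |β.repr v i| * ‖β i‖ := by
        gcongr
        exact le_mul_of_one_le_left (abs_nonneg _) (one_le_abs_det_of_mem_span_int e β hβ)
    _ = |e.det (Function.update β i v)| * ‖β i‖ := by rw [← abs_mul, det_mul_repr_eq_det_update]
    _ ≤ D * (∏ j, ‖Function.update β i v j‖) * ‖β i‖ := by gcongr; exact hD _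
    _ = D * (∏ j, ‖β j‖) * ‖v‖ := by
      have hupd : (fun j => ‖Function.update β i v j‖) = Function.update (fun j => ‖β j‖) i ‖v‖ :=
        funext (Function.apply_update (fun _ => norm) β i v)
      rw [hupd, Finset.prod_update_of_mem (Finset.mem_univ i),
        ← Finset.mul_prod_erase Finset.univ (fun j => ‖β j‖) (Finset.mem_univ i),
        Finset.sdiff_singleton_eq_erase]
      ring

theorem abs_apply_le_of_mem_span_inter_range {β : Basis ι ℝ E} {D : ℝ}
    (hβ : ∀ v i, |β.repr v i| * ‖β i‖ ≤ D * ‖v‖) {S : Set E} {f : E →ₗ[ℝ] ℝ} {c : ℝ}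
    (hc : 0 ≤ c) (hf : ∀ θ ∈ S, |f θ| ≤ c * ‖θ‖) {v : E} (hv : v ∈ span ℝ (S ∩ range β)) :
    |f v| ≤ Fintype.card ι * D * c * ‖v‖ := by
  rw [← image_preimage_eq_inter_range, Basis.mem_span_image] at hv
  have hterm (i : ι) : |β.repr v i * f (β i)| ≤ D * c * ‖v‖ := by
    rw [abs_mul]
    by_cases hi : β.repr v i = 0
    · have := hβ v i
      rw [hi, abs_zero, zero_mul] at this ⊢
      linarith [mul_nonneg hc this]
    calc |β.repr v i| * |f (β i)|
        ≤ |β.repr v i| * (c * ‖β i‖) := by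
          gcongr
          exact hf _ (hv (Finsupp.mem_support_iff.2 hi))
      _ = |β.repr v i| * ‖β i‖ * c := by ring
      _ ≤ D * ‖v‖ * c := mul_le_mul_of_nonneg_right (hβ v i) hc
      _ = D * c * ‖v‖ := by ring
  calc |f v| = |∑ i, β.repr v i * f (β i)| := by
        conv_lhs => rw [← β.sum_repr v, map_sum]
        simp only [map_smul, smul_eq_mul]
    _ ≤ ∑ i, |β.repr v i * f (β i)| := Finset.abs_sum_le_sum_abs _ _
    _ ≤ ∑ _ : ι, D * c * ‖v‖ := Finset.sum_le_sum fun i _ => hterm i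
    _ = Fintype.card ι * D * c * ‖v‖ := by
      rw [Finset.sum_const, Finset.card_univ, nsmul_eq_mul]
      ring

/-- Distortion at most `A` when passing to spans: a linear functional of slope at most `c` along
each vector of a subset `S ⊆ T` has slope at most `A * c` on all of `span ℝ S`. Applied to `⟪x, ·⟫`,
this turns near-orthogonality of `x` to given directions into near-orthogonality to their
span. -/
def HasSpanDistortion (A : ℝ) (T : Set E) : Prop :=
  ∀ S ⊆ T, ∀ (f : E →ₗ[ℝ] ℝ) (c : ℝ), 0 ≤ c → (∀ θ ∈ S, |f θ| ≤ c * ‖θ‖) →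
    ∀ v ∈ span ℝ S, |f v| ≤ A * c * ‖v‖

theorem HasSpanDistortion.subset {A : ℝ} {T T' : Set E} (h : HasSpanDistortion A T)
    (hT : T' ⊆ T) : HasSpanDistortion A T' :=
  fun S hS => h S (hS.trans hT)

theorem exists_hasSpanDistortion_of_subset_lattice (e : Basis ι ℝ E) :
    ∃ C ≥ 1, ∀ s ≥ 1, ∀ T ⊆ (span ℤ (range e) : Set E), (∀ θ ∈ T, ‖θ‖ ≤ s) →
      HasSpanDistortion (C * s ^ Fintype.card ι) T := by
  classical
  obtain ⟨D, hD0, hD⟩ := exists_abs_det_le_prod_norm e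
  set M : ℝ := 1 + ∑ i, ‖e i‖
  have hM1 : 1 ≤ M := le_add_of_nonneg_right (by positivity)
  have he (i : ι) : ‖e i‖ ≤ M := by
    have := Finset.single_le_sum (fun j _ => norm_nonneg (e j)) (Finset.mem_univ i)
    linarith
  refine ⟨max 1 (Fintype.card ι * (D * M ^ Fintype.card ι)), le_max_left _ _, ?_⟩
  intro s hs T hT hTs S hS f c hc hf v hv
  -- Adjoining the basis `e` makes `T` spanning, at the cost of the factor `M` in the norms.
  have hspan : span ℝ (T ∪ range e) = ⊤ :=
    top_le_iff.1 (e.span_eq.ge.trans (span_mono subset_union_right))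
  obtain ⟨β, hβT, hSβ⟩ :=
    exists_basis_subset_of_span_eq_top e (hS.trans (subset_union_left (t := range e))) hspan
  have hβ_int (i : ι) : β i ∈ span ℤ (range e) :=
    union_subset hT subset_span (hβT (mem_range_self i))
  have hβ_norm (i : ι) : ‖β i‖ ≤ M * s := by
    rcases hβT (mem_range_self i) with hi | ⟨j, hj⟩
    · exact (hTs _ hi).trans (le_mul_of_one_le_left (by positivity) hM1)
    · exact hj ▸ (he j).trans (le_mul_of_one_le_right (by positivity) hs)
  have hprod : ∏ i, ‖β i‖ ≤ (M * s) ^ Fintype.card ι :=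
    (Finset.prod_le_prod (fun _ _ => norm_nonneg _) fun i _ => hβ_norm i).trans_eq (by simp)
  calc |f v| ≤ Fintype.card ι * (D * ∏ i, ‖β i‖) * c * ‖v‖ :=
        abs_apply_le_of_mem_span_inter_range (abs_repr_mul_norm_le hD hβ_int) hc hf
          (span_le.2 hSβ hv)
    _ ≤ Fintype.card ι * (D * (M * s) ^ Fintype.card ι) * c * ‖v‖ := by gcongr
    _ = Fintype.card ι * (D * M ^ Fintype.card ι) * s ^ Fintype.card ι * c * ‖v‖ := by
      rw [mul_pow, ← mul_assoc D, ← mul_assoc (Fintype.card ι : ℝ)]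
    _ ≤ max 1 (Fintype.card ι * (D * M ^ Fintype.card ι)) * s ^ Fintype.card ι * c * ‖v‖ := by
      gcongr
      exact le_max_right _ _

end Lattice

section ResonantStep

variable {H : Type*} [NormedAddCommGroup H] [InnerProductSpace ℝ H] {T : Set H} {A R : ℝ}
  {x y : H}

/-- The vectors of `T` resonant at `x` with width `R`: those whose direction has inner product at
most `R` with `x`. The inequality is not strict, so that it holds for `θ = 0`. -/
def resonantSet (T : Set H) (R : ℝ) (x : H) : Set H :=
  {θ ∈ T | |⟪x, θ⟫| ≤ R * ‖θ‖}

/-- The abstract form of `θ`-resonant congruence for some `θ ∈ T`, with all real multiples of `θ`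
allowed since only the directions of the steps matter. -/
def ResonantStep (T : Set H) (R : ℝ) (x y : H) : Prop :=
  ∃ θ ∈ resonantSet T R x ∩ resonantSet T R y, x - y ∈ span ℝ {θ}

instance ResonantStep.stdSymm : Std.Symm (ResonantStep T R) where
  symm x y := by
    rintro ⟨θ, ⟨hx, hy⟩, hxy⟩
    exact ⟨θ, ⟨hy, hx⟩, neg_sub x y ▸ neg_mem hxy⟩

theorem sub_mem_span_of_reflTransGen_resonantStep (h : ReflTransGen (ResonantStep T R) x y) :
    x - y ∈ span ℝ T := by
  induction h with
  | refl => simp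
  | @tail z w _ hzw ih =>
    obtain ⟨θ, hθ, hl⟩ := hzw
    rw [← sub_add_sub_cancel x z w]
    exact add_mem ih (span_mono (singleton_subset_iff.2 hθ.1.1) hl)

theorem resonantSet_subset_of_norm_sub_le {D : ℝ} (h : ‖x - y‖ ≤ D) :
    resonantSet T R y ⊆ resonantSet T (R + D) x := by
  refine fun θ hθ => ⟨hθ.1, ?_⟩
  calc |⟪x, θ⟫| = |⟪y, θ⟫ + ⟪x - y, θ⟫| := by rw [← inner_add_left, add_sub_cancel]
    _ ≤ |⟪y, θ⟫| + |⟪x - y, θ⟫| := abs_add_le _ _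
    _ ≤ R * ‖θ‖ + D * ‖θ‖ := by
      gcongr
      · exact hθ.2
      · exact (abs_real_inner_le_norm _ _).trans (by gcongr)
    _ = (R + D) * ‖θ‖ := by ring

theorem reflTransGen_resonantStep_resonantSet {D : ℝ}
    (hD : ∀ z, ReflTransGen (ResonantStep (resonantSet T (R + D) x) R) x z → ‖x - z‖ ≤ D)
    (h : ReflTransGen (ResonantStep T R) x y) :
    ReflTransGen (ResonantStep (resonantSet T (R + D) x) R) x y := by
  induction h with
  | refl => exact .refl
  | @tail z w _ hzw ih =>
    obtain ⟨θ, ⟨hz, hw⟩, hl⟩ := hzw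
    have hx := resonantSet_subset_of_norm_sub_le (hD z ih) hz
    exact ih.tail ⟨θ, ⟨⟨hx, hz.2⟩, ⟨hx, hw.2⟩⟩, hl⟩

theorem norm_sub_le_of_abs_inner_sub_le {c : ℝ} (hc : 0 ≤ c) (hx : |⟪x, x - y⟫| ≤ c * ‖x - y‖)
    (hy : |⟪y, x - y⟫| ≤ c * ‖x - y‖) : ‖x - y‖ ≤ 2 * c := by
  have hsq : ‖x - y‖ * ‖x - y‖ ≤ 2 * c * ‖x - y‖ := by
    rw [← real_inner_self_eq_norm_mul_norm, inner_sub_left]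
    linarith [(abs_le.1 hx).2, (abs_le.1 hy).1]
  nlinarith [norm_nonneg (x - y)]

theorem HasSpanDistortion.abs_inner_le_of_finrank_le [FiniteDimensional ℝ H]
    (hT : HasSpanDistortion A T) {v : H} (hR : 0 ≤ R)
    (hdim : Set.finrank ℝ T ≤ Set.finrank ℝ (resonantSet T R x)) (hv : v ∈ span ℝ T) :
    |⟪x, v⟫| ≤ A * R * ‖v‖ := by
  have hspan : span ℝ (resonantSet T R x) = span ℝ T :=
    eq_of_le_of_finrank_le (span_mono (sep_subset _ _)) hdim
  exact hT _ (sep_subset _ _) (innerₗ H x) R hR (fun θ hθ => hθ.2) v (hspan ▸ hv)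

theorem HasSpanDistortion.norm_sub_le_of_reflTransGen [FiniteDimensional ℝ H]
    (hT : HasSpanDistortion A T) (hA : 1 ≤ A) (hR : 0 ≤ R) {n : ℕ} (hn : Set.finrank ℝ T ≤ n)
    (h : ReflTransGen (ResonantStep T R) x y) : ‖x - y‖ ≤ (3 * A) ^ n * R - R := by
  induction n generalizing T x y with
  | zero =>
    have hxy := sub_mem_span_of_reflTransGen_resonantStep h
    rw [Submodule.finrank_eq_zero.1 (Nat.le_zero.1 hn), Submodule.mem_bot] at hxy
    simp [hxy]
  | succ n ih =>
    set Q := (3 * A) ^ n * R with hQ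
    have hRQ : R ≤ Q := le_mul_of_one_le_left hR (one_le_pow₀ (by linarith))
    have hQ0 : 0 ≤ Q := hR.trans hRQ
    have hAQ : Q ≤ A * Q := le_mul_of_one_le_left hQ0 hA
    have hsucc : (3 * A) ^ (n + 1) * R = 3 * (A * Q) := by rw [hQ, pow_succ]; ring
    have of_drop {u w : H} (hu : Set.finrank ℝ (resonantSet T Q u) ≤ n)
        (huw : ReflTransGen (ResonantStep T R) u w) : ‖u - w‖ ≤ (3 * A) ^ (n + 1) * R - R := by
      rw [← add_sub_cancel R Q] at hu
      have hsub := hT.subset (sep_subset T fun θ => |⟪u, θ⟫| ≤ (R + (Q - R)) * ‖θ‖)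
      have := ih hsub hu (reflTransGen_resonantStep_resonantSet (fun z hz => ih hsub hu hz) huw)
      linarith
    by_cases hx : Set.finrank ℝ (resonantSet T Q x) ≤ n
    · exact of_drop hx h
    by_cases hy : Set.finrank ℝ (resonantSet T Q y) ≤ n
    · exact norm_sub_rev x y ▸ of_drop hy (symm h)
    have hxy := sub_mem_span_of_reflTransGen_resonantStep h
    have := norm_sub_le_of_abs_inner_sub_le (by linarith)
      (hT.abs_inner_le_of_finrank_le hQ0 (by lia) hxy)
      (hT.abs_inner_le_of_finrank_le hQ0 (by lia) hxy)
    linarith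

end ResonantStep

theorem exists_basis_dualLattice_subset_span_int
    (B : Basis (Fin d) ℝ (EuclideanSpace ℝ (Fin d))) :
    ∃ e : Basis (Fin d) ℝ (EuclideanSpace ℝ (Fin d)), dualLattice B ⊆ span ℤ (range e) := by
  have hinner : LinearMap.BilinForm.Nondegenerate (innerₗ (EuclideanSpace ℝ (Fin d))) :=
    ⟨fun _ h => inner_self_eq_zero.1 (h _), fun _ h => inner_self_eq_zero.1 (h _)⟩
  let b := LinearMap.BilinForm.dualBasis _ hinner B
  let e := b.isUnitSMul fun _ => Real.two_pi_pos.ne'.isUnit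
  refine ⟨e, fun θ hθ => ?_⟩
  choose k hk using fun j => hθ (B j) (subset_span (mem_range_self j))
  have hθ_sum : θ = ∑ j, k j • e j := by
    rw [← b.sum_repr θ]
    refine Finset.sum_congr rfl fun j _ => ?_
    rw [LinearMap.BilinForm.dualBasis_repr_apply, innerₗ_apply_apply, hk,
      Basis.isUnitSMul_apply, ← Int.cast_smul_eq_zsmul ℝ, smul_smul, mul_comm]
  rw [hθ_sum]
  exact sum_mem fun j _ => zsmul_mem (subset_span (mem_range_self j)) _

theorem abs_inner_le_of_mem_layer {ρ a : ℝ} {θ ξ : EuclideanSpace ℝ (Fin d)}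
    (h : ξ ∈ layer ρ a θ) : |⟪ξ, θ⟫| ≤ ρ ^ a * ‖θ‖ := by
  rcases h with rfl | h
  · simp
  · exact h.le

theorem resStep.resonantStep {B : Basis (Fin d) ℝ (EuclideanSpace ℝ (Fin d))} {ρ a r : ℝ}
    {ξ η : EuclideanSpace ℝ (Fin d)} (h : resStep B ρ a r ξ η) :
    ResonantStep (Theta0 B r) (ρ ^ a) ξ η := by
  obtain ⟨θ, hθ, hξ, hη, l, hl⟩ := h
  exact ⟨θ, ⟨⟨hθ, abs_inner_le_of_mem_layer hξ⟩, ⟨hθ, abs_inner_le_of_mem_layer hη⟩⟩,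
    mem_span_singleton.2 ⟨l, hl.symm⟩⟩

theorem exists_norm_sub_le_rpow_of_mem_Ups (B : Basis (Fin d) ℝ (EuclideanSpace ℝ (Fin d))) :
    ∃ K : ℝ, ∀ {κ a ρ r : ℝ}, 0 ≤ κ → 1 ≤ ρ → r ≤ ρ ^ κ →
      ∀ ξ, ∀ η ∈ Ups B ρ a r ξ, ‖ξ - η‖ ≤ K * ρ ^ (a + κ * d ^ 2) := by
  obtain ⟨e, he⟩ := exists_basis_dualLattice_subset_span_int B
  obtain ⟨C, hC1, hC⟩ := exists_hasSpanDistortion_of_subset_lattice e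
  refine ⟨(3 * C) ^ d, fun {κ a ρ r} hκ hρ hr ξ η hη => ?_⟩
  have hρ0 : 0 < ρ := zero_lt_one.trans_le hρ
  set s := ρ ^ κ with hs
  have hs1 : 1 ≤ s := Real.one_le_rpow hρ hκ
  have hR : 0 ≤ ρ ^ a := Real.rpow_nonneg hρ0.le a
  have hT : HasSpanDistortion (C * s ^ d) (Theta0 B r) := by
    simpa using hC s hs1 (Theta0 B r) (fun θ hθ => he hθ.1) fun θ hθ => hθ.2.trans hr
  have hdim : Set.finrank ℝ (Theta0 B r) ≤ d :=
    (span ℝ (Theta0 B r)).finrank_le.trans_eq finrank_euclideanSpace_fin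
  have hA : 1 ≤ C * s ^ d := one_le_mul_of_one_le_of_one_le hC1 (one_le_pow₀ hs1)
  have hdiam := hT.norm_sub_le_of_reflTransGen hA hR hdim
    (ReflTransGen.mono (fun _ _ => resStep.resonantStep) _ _ hη)
  calc ‖ξ - η‖ ≤ (3 * (C * s ^ d)) ^ d * ρ ^ a := by linarith
    _ = (3 * C) ^ d * (ρ ^ a * s ^ (d ^ 2)) := by ring
    _ = (3 * C) ^ d * ρ ^ (a + κ * d ^ 2) := by
      rw [Real.rpow_add hρ0, hs, ← Real.rpow_mul_natCast hρ0.le, Nat.cast_pow]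

theorem eventually_mul_rpow_le_mul {p : ℝ} (hp : p < 1) (K : ℝ) {ε : ℝ} (hε : 0 < ε) :
    ∀ᶠ ρ : ℝ in Filter.atTop, K * ρ ^ p ≤ ε * ρ := by
  filter_upwards [(tendsto_rpow_atTop (sub_pos.2 hp)).eventually_ge_atTop (K / ε),
    Filter.eventually_gt_atTop 0] with ρ hK hρ
  calc K * ρ ^ p ≤ ε * ρ ^ (1 - p) * ρ ^ p := by
        gcongr
        exact (div_le_iff₀' hε).1 hK
    _ = ε * ρ := by rw [mul_assoc, ← Real.rpow_add hρ, sub_add_cancel, Real.rpow_one]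

theorem GoodParams.exponent_le {B : Basis (Fin d) ℝ (EuclideanSpace ℝ (Fin d))} {ρ r κ : ℝ}
    {α : ℕ → ℝ} (h : GoodParams B ρ r κ α) {m n : ℕ} (hmn : m ≤ n) (hn : n ≤ d) :
    α m ≤ α n := by
  obtain ⟨-, hκ, -, hα, -⟩ := h
  induction n, hmn using Nat.le_induction with
  | base => exact le_rfl
  | succ n _ ih =>
    have := hα n hn
    have : 0 ≤ 2 * κ * (d : ℝ) ^ 2 := by positivity
    linarith [ih (by lia)]

theorem GoodParams.diameter_exponent_lt_one {B : Basis (Fin d) ℝ (EuclideanSpace ℝ (Fin d))}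
    {ρ r κ : ℝ} {α : ℕ → ℝ} (h : GoodParams B ρ r κ α) (hd : 2 ≤ d) :
    α 1 + κ * d ^ 2 < 1 := by
  have h2d := h.exponent_le hd le_rfl
  obtain ⟨-, hκ, -, hα, hαd, -⟩ := h
  have h12 : α 1 + 2 * κ * (d : ℝ) ^ 2 < α 2 := hα 1 hd
  have : 0 ≤ κ * (d : ℝ) ^ 2 := by positivity
  linarith

theorem ups_norm_comparable_general (B : Basis (Fin d) ℝ (EuclideanSpace ℝ (Fin d)))
    {κ a ε : ℝ} (hκ : 0 ≤ κ) (ha : a + κ * d ^ 2 < 1) (hε : 0 < ε) :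
    ∃ ρ₀ : ℝ, ∀ ρ r : ℝ, ρ₀ ≤ ρ → r ≤ ρ ^ κ → ∀ ξ : EuclideanSpace ℝ (Fin d), ρ / 2 ≤ ‖ξ‖ →
      ∀ η ∈ Ups B ρ a r ξ, (1 - ε) * ‖ξ‖ ≤ ‖η‖ ∧ ‖η‖ ≤ (1 + ε) * ‖ξ‖ := by
  obtain ⟨K, hK⟩ := exists_norm_sub_le_rpow_of_mem_Ups B
  obtain ⟨ρ₀, hρ₀⟩ := Filter.eventually_atTop.1
    ((eventually_mul_rpow_le_mul ha K (half_pos hε)).and (Filter.eventually_ge_atTop 1))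
  refine ⟨ρ₀, fun ρ r hρ hr ξ hξ η hη => ?_⟩
  obtain ⟨hKρ, hρ1⟩ := hρ₀ ρ hρ
  have hdist : ‖ξ - η‖ ≤ ε * ‖ξ‖ :=
    calc ‖ξ - η‖ ≤ K * ρ ^ (a + κ * d ^ 2) := hK hκ hρ1 hr ξ η hη
      _ ≤ ε / 2 * ρ := hKρ
      _ = ε * (ρ / 2) := by ring
      _ ≤ ε * ‖ξ‖ := by gcongr
  have hlower := norm_sub_norm_le ξ η
  have hupper := norm_sub_norm_le η ξ
  rw [norm_sub_rev] at hupper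
  constructor <;> linarith

/-- Lemma 5.7: there are 0 < c ≤ C depending only on d and Γ and,
for each κ and exponents α, a ρ₀ such that for all ρ ≥ ρ₀, all ξ with |ξ| ≥ ρ/2 and
all η ∈ Υ(ξ), c|ξ| ≤ |η| ≤ C|ξ|. -/
theorem ups_norm_comparable
    (d : ℕ) (hd : 2 ≤ d) (B : Basis (Fin d) ℝ (EuclideanSpace ℝ (Fin d))) :
    ∃ c C : ℝ, 0 < c ∧ c ≤ C ∧ ∀ (κ : ℝ) (α : ℕ → ℝ), ∃ ρ₀ : ℝ,
      ∀ ρ r : ℝ, ρ₀ ≤ ρ → GoodParams B ρ r κ α →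
      ∀ ξ : EuclideanSpace ℝ (Fin d), ρ / 2 ≤ ‖ξ‖ →
      ∀ η ∈ Ups B ρ (α 1) r ξ, c * ‖ξ‖ ≤ ‖η‖ ∧ ‖η‖ ≤ C * ‖ξ‖ := by
  refine ⟨1 - 1 / 2, 1 + 1 / 2, by norm_num, by norm_num, fun κ α => ?_⟩
  by_cases hα : ∃ ρ r, GoodParams B ρ r κ α
  · obtain ⟨_, _, h⟩ := hα
    obtain ⟨ρ₀, hρ₀⟩ := ups_norm_comparable_general B h.2.1.le (h.diameter_exponent_lt_one hd)
      one_half_pos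
    exact ⟨ρ₀, fun ρ r hρ hgood => hρ₀ ρ r hρ hgood.2.2.2.2.2.1⟩
  · exact ⟨0, fun ρ r _ hgood => absurd ⟨ρ, r, hgood⟩ hα⟩
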